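/- arXiv:math/9603216 — 8 statements merged into one kernel-verified Lean document; each statement's English description precedes it below -/
import Mathlib

section
/- Let A : ℕ → ℝ → ℂ be a family of differentiable functions (indexed by n ≥ 1) satisfying: Ȧ_1(t) = −A_1(t) for all t ∈ ℝ with A_1(0) = 1, and for every n ≥ 2: Ȧ_{n−1}(t) + Ȧ_n(t) = (n−1)·A_{n−1}(t) − n·A_n(t) for all t ∈ ℝ, together with A_n(0) = 0. Then for every n ≥ 1 and every t ∈ ℝ, A_n(t) = Σ_{j=1}^n 2·(−1)^{j+1}·C(n+j−1, n−j)·((2j−1)!/((j−1)!·(j+1)!))·e^{−jt}. -/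
/-! For each `n` the system is a first-order linear ODE for `A n` forced by `A (n - 1)`, so its
solutions are determined by their initial values. The exponential sums with coefficients `a(n,j)`
solve it because `(n + 1 - j) a(n+1,j) = (n + j) a(n,j)`. Their initial values vanish for `n ≥ 2`
because `(n² - j²) a(n,j) = -j (j + 2) a(n,j+1)` makes `(n² - 1) ∑_{j ≤ m} a(n,j)` telescope to
`(n² - m²) a(n,m)`, which is `0` at `m = n`. -/

open Finset
open scoped Nat

/-- The coefficient `a(n,j)` of `e^{-jt}` in the `n`-th coefficient function of the Löwner chain of
the Koebe function. Because of truncated subtraction it is meaningful only for `1 ≤ j ≤ n`. -/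
noncomputable def koebeCoeff (n j : ℕ) : ℝ :=
  2 * (-1) ^ (j + 1) * (n + j - 1).choose (n - j) *
    ((2 * j - 1)! / ((j - 1)! * (j + 1)!))

theorem koebeCoeff_one_one : koebeCoeff 1 1 = 1 := by
  norm_num [koebeCoeff]

theorem koebeCoeff_eq_factorial_div (i d : ℕ) :
    koebeCoeff (i + d + 1) (i + 1) =
      2 * (-1) ^ i * (2 * i + d + 1)! / (d ! * i ! * (i + 2)!) := by
  have hchoose : (i + d + 1 + (i + 1) - 1).choose (i + d + 1 - (i + 1)) =
      (d + (2 * i + 1)).choose d := by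
    congr 1 <;> omega
  rw [koebeCoeff, hchoose, Nat.cast_add_choose, show 2 * (i + 1) - 1 = 2 * i + 1 by omega,
    Nat.add_sub_cancel, show d + (2 * i + 1) = 2 * i + d + 1 by ring]
  field_simp
  ring

theorem add_one_sub_mul_koebeCoeff_succ {n j : ℕ} (hj : 1 ≤ j) (hjn : j ≤ n) :
    ((n : ℝ) + 1 - j) * koebeCoeff (n + 1) j = (n + j) * koebeCoeff n j := by
  obtain ⟨i, rfl⟩ := Nat.exists_eq_add_of_le' hj
  obtain ⟨d, rfl⟩ := Nat.exists_eq_add_of_le hjn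
  rw [show i + 1 + d = i + d + 1 by ring, koebeCoeff_eq_factorial_div,
    show i + d + 1 + 1 = i + (d + 1) + 1 by ring, koebeCoeff_eq_factorial_div,
    show 2 * i + (d + 1) + 1 = 2 * i + d + 1 + 1 by ring, Nat.factorial_succ (2 * i + d + 1),
    Nat.factorial_succ d]
  push_cast
  field_simp
  ring

theorem sq_sub_sq_mul_koebeCoeff {n j : ℕ} (hj : 1 ≤ j) (hjn : j < n) :
    ((n : ℝ) ^ 2 - j ^ 2) * koebeCoeff n j = -(j * (j + 2)) * koebeCoeff n (j + 1) := by
  obtain ⟨i, rfl⟩ := Nat.exists_eq_add_of_le' hj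
  obtain ⟨d, rfl⟩ := Nat.exists_eq_add_of_lt hjn
  rw [show i + 1 + d + 1 = i + (d + 1) + 1 by ring, koebeCoeff_eq_factorial_div,
    show i + (d + 1) + 1 = (i + 1) + d + 1 by ring, koebeCoeff_eq_factorial_div,
    show 2 * (i + 1) + d + 1 = 2 * i + (d + 1) + 1 + 1 by ring,
    Nat.factorial_succ (2 * i + (d + 1) + 1), Nat.factorial_succ d, Nat.factorial_succ i,
    show i + 1 + 2 = i + 2 + 1 by ring, Nat.factorial_succ (i + 2)]
  push_cast
  field_simp
  ring

theorem sq_sub_one_mul_sum_koebeCoeff {n m : ℕ} (hm : 1 ≤ m) (hmn : m ≤ n) :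
    ((n : ℝ) ^ 2 - 1) * ∑ j ∈ Icc 1 m, koebeCoeff n j = (n ^ 2 - m ^ 2) * koebeCoeff n m := by
  induction m, hm using Nat.le_induction with
  | base => simp
  | succ m hm ih =>
    rw [sum_Icc_succ_top (by omega), mul_add, ih (by omega),
      sq_sub_sq_mul_koebeCoeff hm (by omega)]
    push_cast
    ring

theorem sum_koebeCoeff_eq_zero {n : ℕ} (hn : 2 ≤ n) : ∑ j ∈ Icc 1 n, koebeCoeff n j = 0 := by
  have hmul : ((n : ℝ) ^ 2 - 1) * ∑ j ∈ Icc 1 n, koebeCoeff n j = 0 := by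
    rw [sq_sub_one_mul_sum_koebeCoeff (by omega) le_rfl, sub_self, zero_mul]
  have hsq : (n : ℝ) ^ 2 - 1 ≠ 0 := by
    have hn2 : (2 : ℝ) ≤ n := by exact_mod_cast hn
    nlinarith
  exact (mul_eq_zero.mp hmul).resolve_left hsq

theorem sum_add_one_sub_mul_koebeCoeff_succ (n : ℕ) (f : ℕ → ℝ) :
    ∑ j ∈ Icc 1 (n + 1), ((n : ℝ) + 1 - j) * koebeCoeff (n + 1) j * f j =
      ∑ j ∈ Icc 1 n, ((n : ℝ) + j) * koebeCoeff n j * f j := by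
  rw [sum_Icc_succ_top (by omega)]
  push_cast
  rw [sub_self, zero_mul, zero_mul, add_zero]
  refine sum_congr rfl fun j hj => ?_
  obtain ⟨hj1, hjn⟩ := mem_Icc.mp hj
  rw [add_one_sub_mul_koebeCoeff_succ hj1 hjn]

/-- The exponential sum `∑_{j=1}^n a(n,j) e^{-jt}`, the closed form of the `n`-th coefficient
function. -/
noncomputable def koebeExpSum (n : ℕ) (t : ℝ) : ℝ :=
  ∑ j ∈ Icc 1 n, koebeCoeff n j * Real.exp (-j * t)

theorem koebeExpSum_one (t : ℝ) : koebeExpSum 1 t = Real.exp (-t) := by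
  simp [koebeExpSum, koebeCoeff_one_one]

theorem koebeExpSum_zero_right {n : ℕ} (hn : 2 ≤ n) : koebeExpSum n 0 = 0 := by
  simp [koebeExpSum, sum_koebeCoeff_eq_zero hn]

theorem hasDerivAt_koebeExpSum (n : ℕ) (t : ℝ) :
    HasDerivAt (koebeExpSum n) (∑ j ∈ Icc 1 n, koebeCoeff n j * (-j * Real.exp (-j * t))) t := by
  refine HasDerivAt.fun_sum fun j _ => HasDerivAt.const_mul _ ?_
  simpa [mul_comm] using ((hasDerivAt_id t).const_mul (-j : ℝ)).exp

theorem deriv_koebeExpSum_add_deriv_succ (n : ℕ) (t : ℝ) :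
    deriv (koebeExpSum n) t + deriv (koebeExpSum (n + 1)) t =
      n * koebeExpSum n t - (n + 1) * koebeExpSum (n + 1) t := by
  have hn : n * koebeExpSum n t - deriv (koebeExpSum n) t =
      ∑ j ∈ Icc 1 n, ((n : ℝ) + j) * koebeCoeff n j * Real.exp (-j * t) := by
    rw [(hasDerivAt_koebeExpSum n t).deriv, koebeExpSum, mul_sum, ← sum_sub_distrib]
    exact sum_congr rfl fun j _ => by ring
  have hsucc : (n + 1) * koebeExpSum (n + 1) t + deriv (koebeExpSum (n + 1)) t =
      ∑ j ∈ Icc 1 (n + 1), ((n : ℝ) + 1 - j) * koebeCoeff (n + 1) j * Real.exp (-j * t) := by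
    rw [(hasDerivAt_koebeExpSum (n + 1) t).deriv, koebeExpSum, mul_sum, ← sum_add_distrib]
    exact sum_congr rfl fun j _ => by ring
  linear_combination hsucc - hn + sum_add_one_sub_mul_koebeCoeff_succ n fun j => Real.exp (-j * t)

section System

variable {E : Type*} [NormedAddCommGroup E] [NormedSpace ℝ E]

theorem eq_of_hasDerivAt_clm_apply_add {L : E →L[ℝ] E} {b f g : ℝ → E} {t₀ : ℝ}
    (hf : ∀ t, HasDerivAt f (L (f t) + b t) t) (hg : ∀ t, HasDerivAt g (L (g t) + b t) t)
    (h₀ : f t₀ = g t₀) : f = g :=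
  ODE_solution_unique_univ (v := fun t x => L x + b t) (s := fun _ => Set.univ)
    (fun t => (L.lipschitz.add (LipschitzWith.const (b t))).lipschitzOnWith)
    (fun t => ⟨hf t, Set.mem_univ _⟩) (fun t => ⟨hg t, Set.mem_univ _⟩) h₀

/-- The differential-difference system of the coefficient functions of the Löwner chain of the Koebe
function, without initial values, for functions with values in a real normed space. The indices
start at `1`: `A 0` is unconstrained. -/
structure IsKoebeChainSolution (A : ℕ → ℝ → E) : Prop where
  differentiable : ∀ n, 1 ≤ n → Differentiable ℝ (A n)
  deriv_one : ∀ t, deriv (A 1) t = -A 1 t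
  deriv_add_deriv_succ : ∀ n, 1 ≤ n → ∀ t,
    deriv (A n) t + deriv (A (n + 1)) t = (n : ℝ) • A n t - ((n : ℝ) + 1) • A (n + 1) t

namespace IsKoebeChainSolution

variable {A B : ℕ → ℝ → E}

theorem hasDerivAt_one (hA : IsKoebeChainSolution A) (t : ℝ) : HasDerivAt (A 1) (-A 1 t) t :=
  hA.deriv_one t ▸ (hA.differentiable 1 le_rfl t).hasDerivAt

theorem hasDerivAt_succ (hA : IsKoebeChainSolution A) {n : ℕ} (hn : 1 ≤ n) (t : ℝ) :
    HasDerivAt (A (n + 1))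
      (-((n : ℝ) + 1) • A (n + 1) t + ((n : ℝ) • A n t - deriv (A n) t)) t := by
  convert (hA.differentiable (n + 1) (by omega) t).hasDerivAt using 1
  rw [eq_sub_of_add_eq' (hA.deriv_add_deriv_succ n hn t)]
  module

theorem eq_of_eq_at_zero (hA : IsKoebeChainSolution A) (hB : IsKoebeChainSolution B)
    (h₀ : ∀ n, 1 ≤ n → A n 0 = B n 0) {n : ℕ} (hn : 1 ≤ n) : A n = B n := by
  induction n, hn using Nat.le_induction with
  | base =>
    exact eq_of_hasDerivAt_clm_apply_add (L := -ContinuousLinearMap.id ℝ E) (b := 0)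
      (by simpa using hA.hasDerivAt_one) (by simpa using hB.hasDerivAt_one) (h₀ 1 le_rfl)
  | succ n hn ih =>
    have hB' := hB.hasDerivAt_succ hn
    rw [← ih] at hB'
    exact eq_of_hasDerivAt_clm_apply_add (L := -((n : ℝ) + 1) • ContinuousLinearMap.id ℝ E)
      (hA.hasDerivAt_succ hn) hB' (h₀ (n + 1) (by omega))

end IsKoebeChainSolution

theorem isKoebeChainSolution_koebeExpSum_smul (v : E) :
    IsKoebeChainSolution fun n t => koebeExpSum n t • v := by
  have hderiv (n : ℕ) (t : ℝ) :
      deriv (fun t => koebeExpSum n t • v) t = deriv (koebeExpSum n) t • v :=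
    deriv_smul_const (hasDerivAt_koebeExpSum n t).differentiableAt v
  refine ⟨fun n _ t => (hasDerivAt_koebeExpSum n t).differentiableAt.smul_const v, fun t => ?_,
    fun n _ t => ?_⟩
  · rw [hderiv, (hasDerivAt_koebeExpSum 1 t).deriv]
    simp [koebeExpSum]
  · rw [hderiv, hderiv, ← add_smul, deriv_koebeExpSum_add_deriv_succ, sub_smul, mul_smul, mul_smul]

theorem koebe_chain_coefficients_closed_form_general {A : ℕ → ℝ → E}
    (hA : IsKoebeChainSolution A) (h₀ : ∀ n, 2 ≤ n → A n 0 = 0) {n : ℕ} (hn : 1 ≤ n) (t : ℝ) :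
    A n t = koebeExpSum n t • A 1 0 := by
  refine congrFun (hA.eq_of_eq_at_zero (isKoebeChainSolution_koebeExpSum_smul (A 1 0)) ?_ hn) t
  intro m hm
  obtain rfl | hm := hm.eq_or_lt
  · simp [koebeExpSum_one]
  · rw [h₀ m hm, koebeExpSum_zero_right hm, zero_smul]

end System

open Finset in
/-- The coefficient functions of the Löwner chain of the Koebe function are uniquely
determined by their differential-difference system, and have the closed form
`A_n(t) = ∑_{j=1}^n 2(-1)^{j+1} C(n+j-1, n-j) (2j-1)!/((j-1)!(j+1)!) e^{-jt}`. -/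
theorem koebe_chain_coefficients_closed_form
    (A : ℕ → ℝ → ℂ)
    (hdiff : ∀ n : ℕ, 1 ≤ n → Differentiable ℝ (A n))
    (h1 : ∀ t : ℝ, deriv (A 1) t = -(A 1 t))
    (h10 : A 1 0 = 1)
    (hrec : ∀ n : ℕ, 2 ≤ n → ∀ t : ℝ,
      deriv (A (n - 1)) t + deriv (A n) t = ((n : ℂ) - 1) * A (n - 1) t - (n : ℂ) * A n t)
    (h0 : ∀ n : ℕ, 2 ≤ n → A n 0 = 0) :
    ∀ n : ℕ, 1 ≤ n → ∀ t : ℝ,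
      A n t = ∑ j ∈ Icc 1 n, 2 * (-1 : ℂ) ^ (j + 1) * (Nat.choose (n + j - 1) (n - j)) *
        ((Nat.factorial (2 * j - 1) : ℂ) /
          ((Nat.factorial (j - 1) : ℂ) * (Nat.factorial (j + 1) : ℂ))) *
        Complex.exp (-(j : ℂ) * (t : ℂ)) := by
  intro n hn t
  have hA : IsKoebeChainSolution A := by
    refine ⟨hdiff, h1, fun m hm s => ?_⟩
    simpa using hrec (m + 1) (by omega) s
  rw [koebe_chain_coefficients_closed_form_general hA h0 hn, h10]
  simp [koebeExpSum, koebeCoeff]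
end

section
/- For every integer n ≥ 2, the alternating binomial sum Σ_{j=1}^n 2·(−1)^{j+1}·C(n+j−1, n−j)·((2j−1)!/((j−1)!·(j+1)!)) equals 0ic (equivalently, A_n(0) = 0 for n ≥ 2, reflecting that the Löwner chain of the Koebe function satisfies w(z,0) = z). -/
/-!
Put `n = m + 2` and `j = k + 1`. Up to the constant factor `2 / (m + 1)`, the summand is
`(-1)^k C(m+1, k) C(m+2+k, m)`, so the sum is an `(m+1)`-st finite difference of the function
`x ↦ C(x, m)`, which is a polynomial of degree only `m`.
-/

lemma fwdDiff_iter_choose_eq_zero_of_lt {r m : ℕ} (h : r < m) :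
    (fwdDiff 1)^[m] (fun x ↦ x.choose r : ℕ → ℤ) = 0 := by
  obtain ⟨d, rfl⟩ := Nat.exists_eq_add_of_lt h
  have hr : (fwdDiff 1)^[r] (fun x ↦ x.choose r : ℕ → ℤ) = fun _ ↦ 1 := by
    simpa using fwdDiff_iter_choose 0 r
  rw [show r + d + 1 = d + 1 + r by ring, Function.iterate_add_apply, hr,
    Function.iterate_succ_apply, fwdDiff_const]
  exact Function.iterate_fixed (fwdDiff_const 1 0) d

open Finset in
lemma alternating_sum_range_choose_smul_shift {M G : Type*} [AddCommMonoid M] [AddCommGroup G]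
    (h : M) (f : M → G) (m : ℕ) (a : M) :
    ∑ k ∈ range (m + 1), ((-1 : ℤ) ^ k * m.choose k) • f (a + k • h) =
      (-1 : ℤ) ^ m • (fwdDiff h)^[m] f a := by
  rw [fwdDiff_iter_eq_sum_shift, smul_sum]
  refine sum_congr rfl fun k hk ↦ ?_
  have hsign : (-1 : ℤ) ^ m * (-1) ^ (m - k) = (-1) ^ k := by
    obtain ⟨d, rfl⟩ := Nat.exists_eq_add_of_le (mem_range_succ_iff.mp hk)
    rw [Nat.add_sub_cancel_left, pow_add, mul_assoc, pow_mul_pow_eq_one d (by norm_num), mul_one]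
  rw [smul_smul, ← mul_assoc, hsign]

open Finset in
lemma alternating_sum_range_choose_mul_choose_eq_zero {r m : ℕ} (h : r < m) (a : ℕ) :
    ∑ k ∈ range (m + 1), (-1 : ℤ) ^ k * m.choose k * (a + k).choose r = 0 := by
  simpa [fwdDiff_iter_choose_eq_zero_of_lt h] using
    alternating_sum_range_choose_smul_shift 1 (fun x ↦ (x.choose r : ℤ)) m a

open Nat in
lemma choose_mul_factorial_div_eq_choose_mul_choose_div {K : Type*} [Field K] [CharZero K] {m k : ℕ}
    (hk : k ≤ m + 1) :
    ((m + 2 + k).choose (m + 1 - k) : K) * ((2 * k + 1)! / (k ! * (k + 2)!)) =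
      (m + 1).choose k * (m + 2 + k).choose m / (m + 1) := by
  have hne (i : ℕ) : (i ! : K) ≠ 0 := mod_cast i.factorial_ne_zero
  have hm : (m + 1 : K) ≠ 0 := m.cast_add_one_ne_zero
  rw [cast_choose K (by lia : m + 1 - k ≤ m + 2 + k), cast_choose K hk,
    cast_choose K (by lia : m ≤ m + 2 + k), show m + 2 + k - (m + 1 - k) = 2 * k + 1 by lia,
    show m + 2 + k - m = k + 2 by lia, factorial_succ m, cast_mul, cast_add_one]
  field_simp [hne]

open Finset in
/-- For every `n ≥ 2`,
`∑_{j=1}^n 2(-1)^{j+1} C(n+j-1, n-j) (2j-1)!/((j-1)!(j+1)!) = 0`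
(i.e. `A_n(0) = 0`, reflecting that the Löwner chain of the Koebe function satisfies
`w(z,0) = z`). -/
theorem koebe_chain_coefficients_vanish_at_zero (n : ℕ) (hn : 2 ≤ n) :
    ∑ j ∈ Icc 1 n, 2 * (-1 : ℚ) ^ (j + 1) * (Nat.choose (n + j - 1) (n - j)) *
      ((Nat.factorial (2 * j - 1) : ℚ) /
        ((Nat.factorial (j - 1) : ℚ) * (Nat.factorial (j + 1) : ℚ))) = 0 := by
  obtain ⟨m, rfl⟩ := Nat.exists_eq_add_of_le' hn
  have hsum : ∑ k ∈ range (m + 2),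
      (-1 : ℚ) ^ k * (m + 1).choose k * (m + 2 + k).choose m = 0 :=
    mod_cast alternating_sum_range_choose_mul_choose_eq_zero m.lt_succ_self (m + 2)
  rw [← mul_zero (2 / (m + 1) : ℚ), ← hsum, mul_sum, ← Ico_add_one_right_eq_Icc,
    sum_Ico_eq_sum_range]
  refine sum_congr rfl fun k hk ↦ ?_
  have hkm : k ≤ m + 1 := mem_range_succ_iff.mp hk
  rw [show m + 2 + (1 + k) - 1 = m + 2 + k by lia, show m + 2 - (1 + k) = m + 1 - k by lia,
    show 2 * (1 + k) - 1 = 2 * k + 1 by lia, show 1 + k - 1 = k by lia,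
    show 1 + k + 1 = k + 2 by lia, mul_assoc, choose_mul_factorial_div_eq_choose_mul_choose_div hkm]
  ring
end

section
/- (Connection between the de Branges and Weinstein functions.) Let n ≥ 1 and let τ_1, …, τ_{n+1} be a de Branges system of index n. Then for every k with 1 ≤ k ≤ n and every t ∈ ℝ, τ̇_k(t) = −k·Λ_k^n(t), where Λ_k^n(t) := Σ_{j=k}^n (−1)^{k+j}·C(2j, j−k)·C(n+j+1, n−j)·e^{−jt}. In particular the de Branges functions are uniquely determined by the system, and the derivative of the k-th de Branges function is −k times the k-th Weinstein function. -/
open Finset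

/-- A de Branges system of index `n`: differentiable functions `τ k : ℝ → ℝ`
(`k = 1, …, n+1`) with `τ (n+1) ≡ 0`, `τ k 0 = n+1-k`, and
`τ_{k+1}(t) - τ_k(t) = τ̇_k(t)/k + τ̇_{k+1}(t)/(k+1)` for `k = 1, …, n`. -/
structure IsDeBrangesSystem (n : ℕ) (τ : ℕ → ℝ → ℝ) : Prop where
  differentiable : ∀ k : ℕ, 1 ≤ k → k ≤ n + 1 → Differentiable ℝ (τ k)
  top_eq_zero : ∀ t : ℝ, τ (n + 1) t = 0
  initial : ∀ k : ℕ, 1 ≤ k → k ≤ n + 1 → τ k 0 = (n : ℝ) + 1 - (k : ℝ)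
  system : ∀ k : ℕ, 1 ≤ k → k ≤ n → ∀ t : ℝ,
    τ (k + 1) t - τ k t = deriv (τ k) t / (k : ℝ) + deriv (τ (k + 1)) t / ((k : ℝ) + 1)

/-- The Weinstein functions in closed form:
`Λ_k^n(t) = ∑_{j=k}^n (-1)^{k+j} C(2j, j-k) C(n+j+1, n-j) e^{-jt}`. -/
noncomputable def weinstein (n k : ℕ) (t : ℝ) : ℝ :=
  ∑ j ∈ Icc k n, (-1 : ℝ) ^ (k + j) * (Nat.choose (2 * j) (j - k)) *
    (Nat.choose (n + j + 1) (n - j)) * Real.exp (-(j : ℝ) * t)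

/-!
The series `σ_k = ∑_{j=k}^n (k/j) c_{k,j} e^{-jt}`, where `c_{k,j}` are the coefficients of
`Λ_k^n`, is a term-by-term antiderivative of `-k Λ_k^n`. The hypergeometric relation
`(j-k) c_{k,j} + (j+k+1) c_{k+1,j} = 0` makes it satisfy `σ_k - σ_{k+1} = Λ_k + Λ_{k+1}`, which is
the de Branges recursion. The initial values `σ_k(0) = n+1-k` then amount to
`Λ_k(0) + Λ_{k+1}(0) = 1`: Pascal's rule in `n` reduces this to an alternating sum evaluated by the
Chu–Vandermonde identity with upper index `-(a+1) + a = -1`. So the `σ_k` form a de Branges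
system. Such a system is unique, because once `τ_{k+1}` is known the recursion is a linear
first-order ODE for `τ_k`.
-/

lemma add_choose_mul_add_choose (p q r : ℕ) :
    (p + q + r).choose p * (q + r).choose q = (p + q + r).choose q * (p + r).choose p := by
  have h := Nat.choose_mul (n := p + q + r) (Nat.le_add_right q r)
  rwa [Nat.choose_symm_of_eq_add (show p + q + r = q + r + p by ring),
    show p + q + r - q = p + r by omega, Nat.add_sub_cancel_left,
    ← Nat.choose_symm_add (a := p)] at h

lemma ring_choose_neg_natCast_add_one (a i : ℕ) :
    Ring.choose (-((a : ℤ) + 1)) i = (-1) ^ i * ((a + i).choose i : ℤ) := by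
  rw [Ring.choose_neg, show (a : ℤ) + 1 + i - 1 = ((a + i : ℕ) : ℤ) by push_cast; ring,
    Ring.choose_natCast]
  simp [Int.negOnePow, Units.smul_def]

lemma sum_antidiagonal_neg_one_pow_mul_choose_mul_choose (a m : ℕ) :
    ∑ p ∈ antidiagonal m, (-1 : ℤ) ^ p.1 * (a + p.1).choose p.1 * a.choose p.2 = (-1) ^ m := by
  calc ∑ p ∈ antidiagonal m, (-1 : ℤ) ^ p.1 * (a + p.1).choose p.1 * a.choose p.2
      = Ring.choose (-((a : ℤ) + 1) + a) m := by
        rw [Ring.add_choose_eq m (Commute.all (-((a : ℤ) + 1)) (a : ℤ))]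
        simp only [ring_choose_neg_natCast_add_one, Ring.choose_natCast]
    _ = Ring.choose (-(((0 : ℕ) : ℤ) + 1)) m := by congr 1; push_cast; ring
    _ = (-1) ^ m := by rw [ring_choose_neg_natCast_add_one]; simp

lemma choose_two_mul_mul_choose_add {n k j : ℕ} (hkj : k ≤ j) (hjn : j ≤ n) :
    (2 * j).choose (j - k) * (n + j).choose (n - j) =
      (n + j).choose (j - k) * (n + k).choose (n - j) := by
  have h := add_choose_mul_add_choose (n - j) (j - k) (j + k)
  rwa [show n - j + (j - k) + (j + k) = n + j by omega, show j - k + (j + k) = 2 * j by omega,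
    show n - j + (j + k) = n + k by omega, mul_comm ((n + j).choose (n - j))] at h

lemma sum_Icc_neg_one_pow_mul_choose_mul_choose {n k : ℕ} (hkn : k ≤ n) :
    ∑ j ∈ Icc k n, (-1 : ℤ) ^ (k + j) * (2 * j).choose (j - k) * (n + j).choose (n - j) =
      (-1) ^ (k + n) := by
  have hsign {j : ℕ} (hkj : k ≤ j) : (-1 : ℤ) ^ (k + j) = (-1) ^ (j - k) := by
    rw [show k + j = 2 * k + (j - k) by omega, pow_add, pow_mul, neg_one_sq, one_pow, one_mul]
  have hterm (j : ℕ) (hj : j ∈ Icc k n) :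
      (-1 : ℤ) ^ (k + j) * (2 * j).choose (j - k) * (n + j).choose (n - j) =
        (-1) ^ (j - k) * (n + j).choose (j - k) * (n + k).choose (n - j) := by
    obtain ⟨hkj, hjn⟩ := mem_Icc.mp hj
    rw [hsign hkj, mul_assoc, mul_assoc]
    exact_mod_cast congrArg ((-1 : ℤ) ^ (j - k) * ·)
      (congrArg Nat.cast (choose_two_mul_mul_choose_add hkj hjn))
  rw [sum_congr rfl hterm, hsign hkn,
    ← sum_antidiagonal_neg_one_pow_mul_choose_mul_choose (n + k) (n - k),
    Nat.sum_antidiagonal_eq_sum_range_succ_mk, ← Ico_add_one_right_eq_Icc, sum_Ico_eq_sum_range,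
    Nat.sub_add_comm hkn]
  refine sum_congr rfl fun i _ ↦ ?_
  rw [Nat.add_sub_cancel_left, Nat.sub_add_eq, ← add_assoc]

/-- The coefficient of `e^{-jt}` in the Weinstein function `Λ_k^n`. It is meaningful for
`k ≤ j ≤ n` only: outside this range the truncated differences `j - k` and `n - j` are `0`, so the
binomial coefficients do not vanish. -/
def weinsteinCoeff (n k j : ℕ) : ℝ :=
  (-1) ^ (k + j) * (2 * j).choose (j - k) * (n + j + 1).choose (n - j)

lemma weinstein_eq_sum_weinsteinCoeff (n k : ℕ) (t : ℝ) :
    weinstein n k t = ∑ j ∈ Icc k n, weinsteinCoeff n k j * Real.exp (-(j : ℝ) * t) := rfl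

lemma sub_mul_weinsteinCoeff (n : ℕ) {k j : ℕ} (hkj : k < j) :
    ((j : ℝ) - k) * weinsteinCoeff n k j =
      -(((j : ℝ) + k + 1) * weinsteinCoeff n (k + 1) j) := by
  obtain ⟨i, rfl⟩ := Nat.exists_eq_add_of_lt hkj
  have hchoose := Nat.choose_succ_right_eq (2 * (k + i + 1)) i
  rw [show 2 * (k + i + 1) - i = 2 * k + i + 2 by omega] at hchoose
  simp only [weinsteinCoeff, show k + i + 1 - k = i + 1 by omega,
    show k + i + 1 - (k + 1) = i by omega, add_right_comm k 1, pow_succ _ (k + (k + i + 1))]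
  have hchoose' := congrArg (Nat.cast : ℕ → ℝ) hchoose
  push_cast at hchoose' ⊢
  linear_combination (-1 : ℝ) ^ (k + (k + i + 1)) *
    (n + (k + i + 1) + 1).choose (n - (k + i + 1)) * hchoose'

lemma weinsteinCoeff_succ_left {n k j : ℕ} (hjn : j ≤ n) :
    weinsteinCoeff (n + 1) k j = weinsteinCoeff n k j +
      (-1) ^ (k + j) * (2 * j).choose (j - k) * (n + 1 + j).choose (n + 1 - j) := by
  unfold weinsteinCoeff
  rw [show n + 1 - j = (n - j) + 1 by omega, Nat.choose_succ_succ, add_right_comm n 1 j]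
  push_cast
  ring

lemma weinstein_zero_right (n k : ℕ) : weinstein n k 0 = ∑ j ∈ Icc k n, weinsteinCoeff n k j := by
  simp [weinstein_eq_sum_weinsteinCoeff]

lemma weinstein_self_zero (n : ℕ) : weinstein n n 0 = 1 := by
  simp [weinstein, ← two_mul, pow_mul]

lemma weinstein_self_succ (n : ℕ) (t : ℝ) : weinstein n (n + 1) t = 0 := by
  simp [weinstein]

lemma weinstein_succ_left_zero {n k : ℕ} (hkn : k ≤ n + 1) :
    weinstein (n + 1) k 0 = weinstein n k 0 + (-1) ^ (k + (n + 1)) := by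
  have hsum := congrArg (Int.cast : ℤ → ℝ) (sum_Icc_neg_one_pow_mul_choose_mul_choose hkn)
  push_cast at hsum
  rw [weinstein_zero_right, weinstein_zero_right, ← hsum, sum_Icc_succ_top hkn,
    sum_Icc_succ_top hkn, ← add_assoc, ← sum_add_distrib]
  congr 1
  · exact sum_congr rfl fun j hj ↦ weinsteinCoeff_succ_left (mem_Icc.mp hj).2
  · simp [weinsteinCoeff]

lemma weinstein_add_weinstein_succ_zero {n k : ℕ} (hkn : k ≤ n) :
    weinstein n k 0 + weinstein n (k + 1) 0 = 1 := by
  induction n, hkn using Nat.le_induction with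
  | base => rw [weinstein_self_zero, weinstein_self_succ, add_zero]
  | succ n hkn ih =>
    rw [weinstein_succ_left_zero (by omega), weinstein_succ_left_zero (by omega),
      add_right_comm k 1, pow_succ]
    linear_combination ih

/-- The closed form `∑_{j=k}^n (k/j) c_{k,j} e^{-jt}` of the `k`-th de Branges function of index
`n`, obtained by integrating `-k Λ_k^n` term by term without a constant. For `k = 0` it is `0`, the
term `j = 0` being the junk value `0 / 0 = 0`. -/
noncomputable def deBrangesFunction (n k : ℕ) (t : ℝ) : ℝ :=
  ∑ j ∈ Icc k n, (k / j : ℝ) * (weinsteinCoeff n k j * Real.exp (-(j : ℝ) * t))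

lemma deBrangesFunction_self_succ (n : ℕ) (t : ℝ) : deBrangesFunction n (n + 1) t = 0 := by
  simp [deBrangesFunction]

lemma hasDerivAt_deBrangesFunction (n k : ℕ) (t : ℝ) :
    HasDerivAt (deBrangesFunction n k) (-(k : ℝ) * weinstein n k t) t := by
  rw [weinstein_eq_sum_weinsteinCoeff, mul_sum]
  refine HasDerivAt.fun_sum fun j hj ↦ ?_
  have hexp : HasDerivAt (fun s : ℝ ↦ Real.exp (-(j : ℝ) * s))
      (Real.exp (-(j : ℝ) * t) * -(j : ℝ)) t := by
    simpa using ((hasDerivAt_id t).const_mul (-(j : ℝ))).exp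
  refine ((hexp.const_mul _).const_mul _).congr_deriv ?_
  rcases Nat.eq_zero_or_pos j with rfl | hj_pos
  · simp [Nat.le_zero.mp (mem_Icc.mp hj).1]
  · field_simp

lemma deBrangesFunction_eq_succ_add {n k : ℕ} (hk : 1 ≤ k) (hkn : k ≤ n) (t : ℝ) :
    deBrangesFunction n k t =
      deBrangesFunction n (k + 1) t + (weinstein n k t + weinstein n (k + 1) t) := by
  have hterm (j : ℕ) (hj : j ∈ Icc (k + 1) n) :
      (k / j : ℝ) * (weinsteinCoeff n k j * Real.exp (-(j : ℝ) * t)) =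
        ((k + 1 : ℕ) / j : ℝ) * (weinsteinCoeff n (k + 1) j * Real.exp (-(j : ℝ) * t)) +
          (weinsteinCoeff n k j * Real.exp (-(j : ℝ) * t) +
            weinsteinCoeff n (k + 1) j * Real.exp (-(j : ℝ) * t)) := by
    have hkj : k < j := (mem_Icc.mp hj).1
    have hj_ne : (j : ℝ) ≠ 0 := by exact_mod_cast (by omega : j ≠ 0)
    field_simp
    push_cast
    linear_combination -sub_mul_weinsteinCoeff n hkj
  have hk_ne : (k : ℝ) ≠ 0 := by exact_mod_cast (by omega : k ≠ 0)
  simp only [deBrangesFunction, weinstein_eq_sum_weinsteinCoeff]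
  rw [← insert_Icc_add_one_left_eq_Icc hkn, sum_insert (by simp), sum_insert (by simp),
    div_self hk_ne, one_mul, sum_congr rfl hterm, sum_add_distrib, sum_add_distrib]
  ring

lemma deBrangesFunction_zero_right {n k : ℕ} (hk : 1 ≤ k) (hkn : k ≤ n + 1) :
    deBrangesFunction n k 0 = (n : ℝ) + 1 - k := by
  induction hkn using Nat.decreasingInduction with
  | self => simp [deBrangesFunction_self_succ]
  | of_succ k hkn ih =>
    rw [deBrangesFunction_eq_succ_add hk (by omega), ih (by omega),
      weinstein_add_weinstein_succ_zero (by omega)]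
    push_cast
    ring

theorem isDeBrangesSystem_deBrangesFunction (n : ℕ) :
    IsDeBrangesSystem n (deBrangesFunction n) where
  differentiable k _ _ t := (hasDerivAt_deBrangesFunction n k t).differentiableAt
  top_eq_zero := deBrangesFunction_self_succ n
  initial _ hk hkn := deBrangesFunction_zero_right hk hkn
  system k hk hkn t := by
    have hk_ne : (k : ℝ) ≠ 0 := by exact_mod_cast (by omega : k ≠ 0)
    have hk_succ_ne : (k : ℝ) + 1 ≠ 0 := by positivity
    rw [(hasDerivAt_deBrangesFunction n k t).deriv,
      (hasDerivAt_deBrangesFunction n (k + 1) t).deriv, deBrangesFunction_eq_succ_add hk hkn]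
    push_cast
    field_simp
    ring

namespace IsDeBrangesSystem

variable {n : ℕ} {σ τ : ℕ → ℝ → ℝ}

lemma hasDerivAt (hτ : IsDeBrangesSystem n τ) {k : ℕ} (hk : 1 ≤ k) (hkn : k ≤ n) (t : ℝ) :
    HasDerivAt (τ k) (k * (τ (k + 1) t - deriv (τ (k + 1)) t / (k + 1) - τ k t)) t := by
  refine (hτ.differentiable k hk (by omega) t).hasDerivAt.congr_deriv ?_
  have hk_ne : (k : ℝ) ≠ 0 := by exact_mod_cast (by omega : k ≠ 0)
  rw [sub_right_comm, hτ.system k hk hkn t, add_sub_cancel_right, mul_div_cancel₀ _ hk_ne]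

theorem unique (hσ : IsDeBrangesSystem n σ) (hτ : IsDeBrangesSystem n τ) {k : ℕ} (hk : 1 ≤ k)
    (hkn : k ≤ n + 1) : σ k = τ k := by
  induction hkn using Nat.decreasingInduction with
  | self => funext t; rw [hσ.top_eq_zero, hτ.top_eq_zero]
  | of_succ k hkn ih =>
    let v (t x : ℝ) : ℝ := k * (τ (k + 1) t - deriv (τ (k + 1)) t / (k + 1) - x)
    have hv (t : ℝ) : LipschitzWith k (v t) :=
      LipschitzWith.of_dist_le_mul fun x y ↦ by
        simp [v, Real.dist_eq, ← mul_sub, abs_mul, abs_sub_comm]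
    refine ODE_solution_unique_univ (v := v) (s := fun _ ↦ Set.univ) (t₀ := 0)
      (fun t ↦ (hv t).lipschitzOnWith) (fun t ↦ ⟨?_, Set.mem_univ _⟩)
      (fun t ↦ ⟨hτ.hasDerivAt hk (by omega) t, Set.mem_univ _⟩) ?_
    · simpa only [v, ih (by omega)] using hσ.hasDerivAt hk (by omega) t
    · rw [hσ.initial k hk (by omega), hτ.initial k hk (by omega)]

end IsDeBrangesSystem

/-- Connection between de Branges and Weinstein functions: for any de Branges system of
index `n` and `1 ≤ k ≤ n`, one has `τ̇_k(t) = -k·Λ_k^n(t)`. -/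
theorem deBranges_deriv_eq_neg_mul_weinstein
    (n : ℕ) (hn : 1 ≤ n) (τ : ℕ → ℝ → ℝ) (hτ : IsDeBrangesSystem n τ) :
    ∀ k : ℕ, 1 ≤ k → k ≤ n → ∀ t : ℝ,
      deriv (τ k) t = -(k : ℝ) * weinstein n k t := by
  intro k hk hkn t
  rw [hτ.unique (isDeBrangesSystem_deBrangesFunction n) hk (by omega)]
  exact (hasDerivAt_deBrangesFunction n k t).deriv
end

section
/- For integers 1 ≤ k ≤ n define Λ_k^n(t) := Σ_{j=k}^n (−1)^{k+j}·C(2j, j−k)·C(n+j+1, n−j)·e^{−jt}. Then for every n ≥ 2, every k with 1 ≤ k ≤ n−1, and every t ∈ ℝ, the differential relation Λ̇_k^n(t) + Λ̇_{k+1}^n(t) = (k+1)·Λ_{k+1}^n(t) − k·Λ_k^n(t) holds. -/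
open Finset

/-!
The system is linear, so it suffices to solve it by the pure exponentials
`(-1)^{k+j} C(2j, j+k) e^{-jt}`, one for each `j`; there it reduces to the recurrence
`(j + k + 1) C(2j, j+k+1) = (j - k) C(2j, j+k)`. Superposing these solutions with the weights
`C(n+j+1, n-j)` gives the Weinstein functions.
-/

theorem cast_choose_succ_right_eq {R : Type*} [Ring R] (n k : ℕ) :
    (n.choose (k + 1) : R) * (k + 1) = n.choose k * (n - k) := by
  rcases le_or_gt k n with hkn | hnk
  · rw [← Nat.cast_sub hkn]
    exact mod_cast congrArg (Nat.cast : ℕ → R) (Nat.choose_succ_right_eq n k)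
  · simp [Nat.choose_eq_zero_of_lt hnk, Nat.choose_eq_zero_of_lt (hnk.trans k.lt_succ_self)]

/-- The `e^{-jt}` component of the `k`-th Weinstein function, up to a weight independent of `k`.
Writing `C(2j, j+k)` for `C(2j, j-k)` makes it vanish for `j < k`, where `j - k` is truncated. -/
noncomputable def weinsteinMode (j k : ℕ) (t : ℝ) : ℝ :=
  (-1) ^ (k + j) * (2 * j).choose (j + k) * Real.exp (-(j : ℝ) * t)

/-- The superposition of the modes `j ∈ s` with arbitrary weights `c j`, as the `k`-th unknown of
the Weinstein system. -/
noncomputable def weinsteinSum (s : Finset ℕ) (c : ℕ → ℝ) (k : ℕ) (t : ℝ) : ℝ :=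
  ∑ j ∈ s, c j * weinsteinMode j k t

theorem weinsteinMode_of_lt {j k : ℕ} (hjk : j < k) (t : ℝ) : weinsteinMode j k t = 0 := by
  simp [weinsteinMode, Nat.choose_eq_zero_of_lt (show 2 * j < j + k by omega)]

theorem weinsteinMode_of_le {j k : ℕ} (hkj : k ≤ j) (t : ℝ) :
    weinsteinMode j k t =
      (-1) ^ (k + j) * (2 * j).choose (j - k) * Real.exp (-(j : ℝ) * t) := by
  rw [weinsteinMode, Nat.choose_symm_of_eq_add (show 2 * j = (j + k) + (j - k) by omega)]

theorem weinsteinMode_succ_mul (j k : ℕ) (t : ℝ) :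
    (j + k + 1) * weinsteinMode j (k + 1) t = (k - j) * weinsteinMode j k t := by
  have choose_rec := cast_choose_succ_right_eq (R := ℝ) (2 * j) (j + k)
  push_cast at choose_rec
  simp only [weinsteinMode, ← add_assoc, pow_add, pow_one]
  linear_combination (-(-1) ^ k * (-1) ^ j * Real.exp (-(j : ℝ) * t)) * choose_rec

theorem hasDerivAt_weinsteinMode (j k : ℕ) (t : ℝ) :
    HasDerivAt (weinsteinMode j k) (-j * weinsteinMode j k t) t := by
  have exponent : HasDerivAt (fun x : ℝ => -(j : ℝ) * x) (-j) t := hasDerivAt_const_mul _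
  refine (exponent.exp.const_mul ((-1) ^ (k + j) * ((2 * j).choose (j + k) : ℝ))).congr_deriv ?_
  rw [weinsteinMode]
  ring

theorem hasDerivAt_weinsteinSum (s : Finset ℕ) (c : ℕ → ℝ) (k : ℕ) (t : ℝ) :
    HasDerivAt (weinsteinSum s c k) (∑ j ∈ s, c j * (-j * weinsteinMode j k t)) t :=
  HasDerivAt.fun_sum fun j _ => (hasDerivAt_weinsteinMode j k t).const_mul (c j)

theorem weinstein_eq_weinsteinSum (n k : ℕ) :
    weinstein n k = weinsteinSum (range (n + 1)) (fun j => (n + j + 1).choose (n - j)) k := by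
  funext t
  have index_subset : Icc k n ⊆ range (n + 1) := fun j hj => by
    simp only [mem_Icc, mem_range] at hj ⊢
    omega
  rw [weinsteinSum, ← sum_subset index_subset]
  · refine sum_congr rfl fun j hj => ?_
    rw [weinsteinMode_of_le (mem_Icc.mp hj).1]
    ring
  · intro j hj hjk
    simp only [mem_range, mem_Icc] at hj hjk
    rw [weinsteinMode_of_lt (by omega), mul_zero]

theorem weinstein_system_general (s : Finset ℕ) (c : ℕ → ℝ) (k : ℕ) (t : ℝ) :
    deriv (weinsteinSum s c k) t + deriv (weinsteinSum s c (k + 1)) t =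
      ((k : ℝ) + 1) * weinsteinSum s c (k + 1) t - (k : ℝ) * weinsteinSum s c k t := by
  rw [(hasDerivAt_weinsteinSum s c k t).deriv, (hasDerivAt_weinsteinSum s c (k + 1) t).deriv]
  simp only [weinsteinSum, mul_sum, ← sum_add_distrib, ← sum_sub_distrib]
  refine sum_congr rfl fun j _ => ?_
  linear_combination -c j * weinsteinMode_succ_mul j k t

/-- The Weinstein functions satisfy the differential equations system
`Λ̇_k^n + Λ̇_{k+1}^n = (k+1)Λ_{k+1}^n - k·Λ_k^n` for `1 ≤ k ≤ n-1`. -/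
theorem weinstein_system (n : ℕ) (hn : 2 ≤ n) (k : ℕ) (hk1 : 1 ≤ k) (hk2 : k ≤ n - 1)
    (t : ℝ) :
    deriv (weinstein n k) t + deriv (weinstein n (k + 1)) t =
      ((k : ℝ) + 1) * weinstein n (k + 1) t - (k : ℝ) * weinstein n k t := by
  simp only [weinstein_eq_weinsteinSum]
  exact weinstein_system_general _ _ k t
end

section
/- For all integers 1 ≤ k ≤ n, the alternating binomial sum Σ_{j=k}^n (−1)^{k+j}·C(2j, j−k)·C(n+j+1, n−j) equals 1 if n − k is even and equals 0 if n − k is odd. (This expresses the initial values Λ_k^n(0) of the Weinstein functions, coming from W_k(z,0) = z^k/(1−z²) = Σ_{j≥0} z^{2j+k}.) -/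
/-!
The generating function of the complete homogeneous polynomials `h_m(x, y) = ∑_{i+j=m} x^i y^j` is
`1 / ((1 - xt)(1 - yt)) = 1 / (1 - (x + y)t + xyt²)`. Comparing coefficients gives the
Girard–Waring formula `h_m(x, y) = ∑_{i+k=m} C(i, k) (x + y)^(i-k) (-xy)^k`; here this is read off
from the recurrence `h_{m+2} = (x + y) h_{m+1} - xy h_m`, which both sides satisfy. For `m = 2n + 1`
both sides are divisible by `x + y`, and at `(x, y) = (X, 1)` the quotients are
`∑_j C(n+j+1, n-j) (X + 1)^(2j) (-X)^(n-j) = ∑_{i≤n} X^(2i)`. The coefficient of `X^(n-k)` is the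
claim.
-/

namespace Weinstein

open Finset Polynomial

section CommSemiring

variable {R : Type*} [CommSemiring R]

lemma choose_succ_succ_mul_pow_mul_pow (s b : R) (i k : ℕ) :
    ((i + 1).choose (k + 1) : R) * s ^ (i - k) * b ^ (k + 1) =
      s * ((i.choose (k + 1) : R) * s ^ (i - (k + 1)) * b ^ (k + 1)) +
        b * ((i.choose k : R) * s ^ (i - k) * b ^ k) := by
  rw [Nat.choose_succ_succ, Nat.cast_add]
  rcases lt_or_ge k i with hki | hik
  · rw [show i - k = i - (k + 1) + 1 by lia]
    ring
  · rw [Nat.choose_eq_zero_of_lt (Nat.lt_succ_of_le hik), Nat.cast_zero]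
    ring

lemma sum_antidiagonal_choose_mul_pow_mul_pow_add_two (s b : R) (m : ℕ) :
    ∑ p ∈ antidiagonal (m + 2), (p.1.choose p.2 : R) * s ^ (p.1 - p.2) * b ^ p.2 =
      s * ∑ p ∈ antidiagonal (m + 1), (p.1.choose p.2 : R) * s ^ (p.1 - p.2) * b ^ p.2 +
        b * ∑ p ∈ antidiagonal m, (p.1.choose p.2 : R) * s ^ (p.1 - p.2) * b ^ p.2 := by
  rw [Nat.sum_antidiagonal_succ', Nat.sum_antidiagonal_succ, Nat.sum_antidiagonal_succ']
  simp only [Nat.add_sub_add_right, choose_succ_succ_mul_pow_mul_pow, sum_add_distrib, mul_add,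
    mul_sum]
  simp [pow_succ', add_assoc]

lemma sum_antidiagonal_succ_pow_mul_pow (x y : R) (m : ℕ) :
    ∑ p ∈ antidiagonal (m + 1), x ^ p.1 * y ^ p.2 =
      y ^ (m + 1) + x * ∑ p ∈ antidiagonal m, x ^ p.1 * y ^ p.2 := by
  simp [Nat.sum_antidiagonal_succ, mul_sum, pow_succ', mul_assoc]

lemma sum_antidiagonal_pow_mul_pow_add_two (x y : R) (m : ℕ) :
    ∑ p ∈ antidiagonal (m + 2), x ^ p.1 * y ^ p.2 +
        x * y * ∑ p ∈ antidiagonal m, x ^ p.1 * y ^ p.2 =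
      (x + y) * ∑ p ∈ antidiagonal (m + 1), x ^ p.1 * y ^ p.2 := by
  rw [sum_antidiagonal_succ_pow_mul_pow _ _ (m + 1), sum_antidiagonal_succ_pow_mul_pow _ _ m]
  ring

lemma sum_antidiagonal_two_mul_add_one_pow_mul_pow (x y : R) (n : ℕ) :
    ∑ p ∈ antidiagonal (2 * n + 1), x ^ p.1 * y ^ p.2 =
      (x + y) * ∑ p ∈ antidiagonal n, (x ^ 2) ^ p.1 * (y ^ 2) ^ p.2 := by
  induction n with
  | zero => simp [Nat.sum_antidiagonal_succ, add_comm]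
  | succ n ih =>
    rw [show 2 * (n + 1) + 1 = 2 * n + 1 + 1 + 1 by ring, sum_antidiagonal_succ_pow_mul_pow,
      sum_antidiagonal_succ_pow_mul_pow, sum_antidiagonal_succ_pow_mul_pow (x ^ 2), ih]
    ring

end CommSemiring

lemma sum_antidiagonal_two_mul_add_one {M : Type*} [AddCommMonoid M] (f : ℕ × ℕ → M)
    (hf : ∀ i k, i < k → f (i, k) = 0) (n : ℕ) :
    ∑ p ∈ antidiagonal (2 * n + 1), f p = ∑ j ∈ range (n + 1), f (n + j + 1, n - j) := by
  symm
  apply sum_of_injOn fun j ↦ (n + j + 1, n - j)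
  · intro i _ j _ hij
    simpa using congrArg Prod.fst hij
  · intro j hj
    rw [mem_coe, mem_range] at hj
    rw [mem_coe, HasAntidiagonal.mem_antidiagonal]
    lia
  · rintro ⟨i, k⟩ hik hnot
    rw [HasAntidiagonal.mem_antidiagonal] at hik
    refine hf i k (lt_of_not_ge fun hki ↦ hnot ⟨i - (n + 1), ?_, ?_⟩)
    · rw [mem_coe, mem_range]
      lia
    · ext <;> dsimp only <;> lia
  · simp

section CommRing

variable {R : Type*} [CommRing R]

theorem sum_antidiagonal_choose_mul_add_pow_mul_neg_mul_pow (x y : R) (m : ℕ) :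
    ∑ p ∈ antidiagonal m, (p.1.choose p.2 : R) * (x + y) ^ (p.1 - p.2) * (-(x * y)) ^ p.2 =
      ∑ p ∈ antidiagonal m, x ^ p.1 * y ^ p.2 := by
  induction m using Nat.twoStepInduction with
  | zero => simp
  | one => simp [Nat.sum_antidiagonal_succ, add_comm]
  | more m ih₀ ih₁ =>
    rw [sum_antidiagonal_choose_mul_pow_mul_pow_add_two, ih₀, ih₁]
    linear_combination -sum_antidiagonal_pow_mul_pow_add_two x y m

theorem sum_choose_mul_X_add_one_pow_mul_neg_X_pow (n : ℕ) :
    ∑ j ∈ range (n + 1), ((n + j + 1).choose (n - j) : R[X]) * (X + 1) ^ (2 * j) * (-X) ^ (n - j) =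
      ∑ i ∈ range (n + 1), X ^ (2 * i) := by
  have hreg : IsRegular (X + 1 : R[X]) := by simpa using (monic_X_add_C (1 : R)).isRegular
  refine hreg.left ?_
  calc (X + 1) * ∑ j ∈ range (n + 1),
        ((n + j + 1).choose (n - j) : R[X]) * (X + 1) ^ (2 * j) * (-X) ^ (n - j)
    _ = ∑ p ∈ antidiagonal (2 * n + 1),
          (p.1.choose p.2 : R[X]) * (X + 1) ^ (p.1 - p.2) * (-(X * 1)) ^ p.2 := by
      rw [sum_antidiagonal_two_mul_add_one _ fun i k hik ↦ by simp [Nat.choose_eq_zero_of_lt hik],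
        mul_sum]
      refine sum_congr rfl fun j hj ↦ ?_
      rw [show n + j + 1 - (n - j) = 2 * j + 1 by rw [mem_range] at hj; lia]
      ring
    _ = ∑ p ∈ antidiagonal (2 * n + 1), X ^ p.1 * 1 ^ p.2 :=
      sum_antidiagonal_choose_mul_add_pow_mul_neg_mul_pow X 1 _
    _ = (X + 1) * ∑ p ∈ antidiagonal n, (X ^ 2) ^ p.1 * (1 ^ 2) ^ p.2 :=
      sum_antidiagonal_two_mul_add_one_pow_mul_pow X 1 n
    _ = (X + 1) * ∑ i ∈ range (n + 1), X ^ (2 * i) := by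
      simp [Nat.sum_antidiagonal_eq_sum_range_succ_mk, pow_mul]

lemma coeff_X_add_one_pow_mul_neg_X_pow (m l d : ℕ) :
    ((X + 1 : R[X]) ^ m * (-X) ^ l).coeff d =
      if l ≤ d then (-1) ^ l * (m.choose (d - l) : R) else 0 := by
  rw [neg_pow, ← mul_assoc, coeff_mul_X_pow', mul_comm,
    show (-1 : R[X]) ^ l = C ((-1) ^ l) by simp, coeff_C_mul, coeff_X_add_one_pow]

lemma coeff_sum_X_pow_two_mul {n d : ℕ} (hd : d ≤ n) :
    (∑ i ∈ range (n + 1), (X : R[X]) ^ (2 * i)).coeff d = if Even d then 1 else 0 := by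
  simp only [finsetSum_coeff, coeff_X_pow]
  split_ifs with heven
  · obtain ⟨m, rfl⟩ := heven
    rw [sum_eq_single_of_mem m (by rw [mem_range]; lia) fun i _ hi ↦ if_neg (by lia),
      if_pos (two_mul m).symm]
  · exact sum_eq_zero fun i _ ↦ if_neg fun (h : d = 2 * i) ↦ heven (h ▸ even_two_mul i)

theorem sum_Icc_neg_one_pow_mul_choose_mul_choose {n k : ℕ} (hkn : k ≤ n) :
    ∑ j ∈ Icc k n, (-1 : R) ^ (n - j) * (2 * j).choose (j - k) * (n + j + 1).choose (n - j) =
      if Even (n - k) then 1 else 0 := by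
  rw [← coeff_sum_X_pow_two_mul (n.sub_le k), ← sum_choose_mul_X_add_one_pow_mul_neg_X_pow,
    finsetSum_coeff]
  simp only [mul_assoc, coeff_natCast_mul, coeff_X_add_one_pow_mul_neg_X_pow]
  apply sum_subset_zero_on_sdiff
  · intro j hj
    rw [mem_Icc] at hj
    rw [mem_range]
    lia
  · intro j hj
    rw [mem_sdiff, mem_range, mem_Icc] at hj
    rw [if_neg (by lia), mul_zero]
  · intro j hj
    rw [mem_Icc] at hj
    rw [if_pos (by lia), show n - k - (n - j) = j - k by lia]
    ring

end CommRing

end Weinstein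

open Finset in
/-- For `1 ≤ k ≤ n`, `∑_{j=k}^n (-1)^{k+j} C(2j, j-k) C(n+j+1, n-j)` equals `1` if
`n - k` is even and `0` if `n - k` is odd (the initial values `Λ_k^n(0)` of the
Weinstein functions, coming from `W_k(z,0) = z^k/(1-z²) = ∑_{j≥0} z^{2j+k}`). -/
theorem weinstein_initial_values (n k : ℕ) (hk1 : 1 ≤ k) (hk2 : k ≤ n) :
    ∑ j ∈ Icc k n, (-1 : ℤ) ^ (k + j) * (Nat.choose (2 * j) (j - k)) *
      (Nat.choose (n + j + 1) (n - j)) = if Even (n - k) then 1 else 0 := by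
  have hsign (j : ℕ) (hj : j ∈ Icc k n) : (-1 : ℤ) ^ (k + j) = (-1) ^ (n - k) * (-1) ^ (n - j) := by
    rw [mem_Icc] at hj
    rw [← pow_add]
    exact neg_one_pow_congr (by grind)
  calc _ = (-1) ^ (n - k) * ∑ j ∈ Icc k n,
        (-1 : ℤ) ^ (n - j) * (2 * j).choose (j - k) * (n + j + 1).choose (n - j) := by
        rw [mul_sum]
        refine sum_congr rfl fun j hj ↦ ?_
        rw [hsign j hj]
        ring
    _ = (-1) ^ (n - k) * if Even (n - k) then 1 else 0 := by
        rw [Weinstein.sum_Icc_neg_one_pow_mul_choose_mul_choose hk2]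
    _ = if Even (n - k) then 1 else 0 := by
        split_ifs with heven
        · rw [heven.neg_one_pow, mul_one]
        · rw [mul_zero]
end

section
/- (Gosper-summable identity.) For all integers 1 ≤ j ≤ n, Σ_{l=j}^n (n+1−l)·C(l+j−1, l−j) = ((j+n)·(n+1+j))/(2j·(2j+1)) · C(n+j−1, n−j). Equivalently, 2j·(2j+1)·Σ_{l=j}^n (n+1−l)·C(l+j−1, l−j) = (j+n)·(n+1+j)·C(n+j−1, n−j). -/
/-!
The weight `n + 1 - l` is a coefficient of `(1 - X)⁻²` and the binomial coefficient is one of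
`(1 - X)^(-2j)`, so the sum is the coefficient of `X^(n - j)` in `(1 - X)^(-2j - 2)`, which is
`C(n + j + 1, n - j)`. Lowering the upper index twice by absorption gives the closed form.
-/

section WeightedHockeyStick

open Finset

theorem sum_antidiagonal_add_choose_mul_add_choose (a b n : ℕ) :
    ∑ p ∈ antidiagonal n, (a + p.1).choose a * (b + p.2).choose b =
      (a + b + 1 + n).choose (a + b + 1) := by
  have h := congrArg (fun u : (PowerSeries ℤ)ˣ => PowerSeries.coeff n u.val)
    (PowerSeries.invOneSubPow_add ℤ (a + 1) (b + 1))
  simp only [show a + 1 + (b + 1) = a + b + 1 + 1 by ring, Units.val_mul,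
    PowerSeries.invOneSubPow_val_succ_eq_mk_add_choose, PowerSeries.coeff_mul,
    PowerSeries.coeff_mk] at h
  exact_mod_cast h.symm

theorem sum_range_sub_mul_add_choose (a n : ℕ) :
    ∑ i ∈ range (n + 1), (n + 1 - i) * (a + i).choose i = (a + 2 + n).choose n := by
  rw [← Nat.choose_symm_add, ← sum_antidiagonal_add_choose_mul_add_choose a 1 n,
    Nat.sum_antidiagonal_eq_sum_range_succ_mk]
  refine sum_congr rfl fun i hi => ?_
  rw [Nat.choose_one_right, Nat.choose_symm_add, mul_comm, add_comm n 1,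
    Nat.add_sub_assoc (mem_range_succ_iff.mp hi)]

theorem sum_Icc_sub_mul_add_sub_one_choose {j n : ℕ} (hj : 1 ≤ j) (hjn : j ≤ n) :
    ∑ l ∈ Icc j n, (n + 1 - l) * (l + j - 1).choose (l - j) = (n + j + 1).choose (n - j) := by
  have hrange : n + 1 - j = n - j + 1 := Nat.sub_add_comm hjn
  have hupper : n + j + 1 = 2 * j - 1 + 2 + (n - j) := by omega
  rw [← Ico_add_one_right_eq_Icc, sum_Ico_eq_sum_range, hrange, hupper,
    ← sum_range_sub_mul_add_choose]
  refine sum_congr rfl fun i _ => ?_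
  rw [show n + 1 - (j + i) = n - j + 1 - i by omega, show j + i + j - 1 = 2 * j - 1 + i by omega,
    Nat.add_sub_cancel_left]

end WeightedHockeyStick

theorem choose_mul_add_one_mul_add_two (n k : ℕ) :
    n.choose k * ((n + 1) * (n + 2)) = (n + 2).choose k * ((n + 1 - k) * (n + 2 - k)) :=
  calc n.choose k * ((n + 1) * (n + 2))
      = n.choose k * (n + 1) * (n + 2) := by ring
    _ = (n + 1).choose k * (n + 1 + 1) * (n + 1 - k) := by rw [Nat.choose_mul_succ_eq]; ring
    _ = (n + 2).choose k * ((n + 1 - k) * (n + 2 - k)) := by rw [Nat.choose_mul_succ_eq]; ring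

open Finset in
/-- Gosper-summable identity: for `1 ≤ j ≤ n`,
`∑_{l=j}^n (n+1-l) C(l+j-1, l-j) = ((j+n)(n+1+j))/(2j(2j+1)) · C(n+j-1, n-j)`;
equivalently `2j(2j+1)·∑_{l=j}^n (n+1-l) C(l+j-1, l-j) = (j+n)(n+1+j)·C(n+j-1, n-j)`. -/
theorem gosper_summable_identity (j n : ℕ) (hj : 1 ≤ j) (hjn : j ≤ n) :
    (∑ l ∈ Icc j n, ((n : ℚ) + 1 - (l : ℚ)) * (Nat.choose (l + j - 1) (l - j)) =
      (((j : ℚ) + n) * ((n : ℚ) + 1 + j)) / ((2 * (j : ℚ)) * (2 * (j : ℚ) + 1)) *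
        (Nat.choose (n + j - 1) (n - j))) ∧
    (2 * j * (2 * j + 1) * ∑ l ∈ Icc j n, (n + 1 - l) * Nat.choose (l + j - 1) (l - j) =
      (j + n) * (n + 1 + j) * Nat.choose (n + j - 1) (n - j)) := by
  have hnat : 2 * j * (2 * j + 1) * ∑ l ∈ Icc j n, (n + 1 - l) * (l + j - 1).choose (l - j) =
      (j + n) * (n + 1 + j) * (n + j - 1).choose (n - j) := by
    have habsorb := choose_mul_add_one_mul_add_two (n + j - 1) (n - j)
    rw [show n + j - 1 + 1 = j + n by omega, show n + j - 1 + 2 = n + 1 + j by omega,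
      show j + n - (n - j) = 2 * j by omega, show n + 1 + j - (n - j) = 2 * j + 1 by omega]
      at habsorb
    rw [sum_Icc_sub_mul_add_sub_one_choose hj hjn, add_right_comm]
    linarith
  have hcast : ∑ l ∈ Icc j n, ((n : ℚ) + 1 - l) * (l + j - 1).choose (l - j) =
      ((∑ l ∈ Icc j n, (n + 1 - l) * (l + j - 1).choose (l - j) : ℕ) : ℚ) := by
    push_cast
    refine sum_congr rfl fun l hl => ?_
    rw [Nat.cast_sub (Nat.le_succ_of_le (mem_Icc.mp hl).2), Nat.cast_succ]
  refine ⟨?_, hnat⟩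
  have hden : 2 * (j : ℚ) * (2 * j + 1) ≠ 0 := by positivity
  rw [hcast, div_mul_eq_mul_div, eq_div_iff hden, mul_comm]
  exact_mod_cast hnat
end

section
/- For all integers 1 ≤ j ≤ n, the identity C(2j, j−1)·C(n+j+1, n−j) = 2j·((2j−1)!/((j−1)!·(j+1)!))·Σ_{l=j}^n (n+1−l)·C(l+j−1, l−j) holds. (This identifies the coefficient a_j^{(n,1)} of e^{−jt} in the first Weinstein function Λ_1^n(t) = −Σ_{l=1}^n (n+1−l)·Ȧ_l(t).) -/
/-!
The sum is the discrete convolution of `k ↦ k + 1` with a column of Pascal's triangle. These are the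
coefficient sequences of `(1 - X)⁻²` and `(1 - X)⁻⁽ᵃ⁺¹⁾`, whose product `(1 - X)⁻⁽ᵃ⁺³⁾` again has
binomial coefficients; with `a = 2 * j - 1` this evaluates the sum to `C(n + j + 1, n - j)`. The
factor in front of it is `C(2 * j, j - 1)` written with factorials.
-/

open Finset PowerSeries in
theorem sum_antidiagonal_choose_add_mul_choose_add (a b m : ℕ) :
    ∑ p ∈ antidiagonal m, (a + p.1).choose a * (b + p.2).choose b =
      (a + b + 1 + m).choose (a + b + 1) := by
  have series_mul : (mk fun i ↦ ((a + i).choose a : ℤ)) * mk (fun i ↦ ((b + i).choose b : ℤ)) =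
      mk fun i ↦ ((a + b + 1 + i).choose (a + b + 1) : ℤ) := by
    simp only [← mk_one_pow_eq_mk_choose_add, ← pow_add]
    congr 1
    ring
  have coeff_eq := congrArg (coeff m) series_mul
  simp only [coeff_mul, coeff_mk] at coeff_eq
  exact_mod_cast coeff_eq

open Finset in
theorem sum_Icc_sub_mul_choose_sub {R : Type*} [Ring R] (c : ℕ) {j n : ℕ} (hjn : j ≤ n) :
    ∑ l ∈ Icc j n, ((n : R) + 1 - l) * (l + c).choose (l - j) = (n + c + 2).choose (n - j) := by
  obtain ⟨m, rfl⟩ := Nat.exists_eq_add_of_le hjn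
  calc ∑ l ∈ Icc j (j + m), (((j + m : ℕ) : R) + 1 - l) * (l + c).choose (l - j)
    _ = ∑ i ∈ range (m + 1), ((1 + (m - i)).choose 1 : R) * (j + c + i).choose (j + c) := by
      rw [← Ico_add_one_right_eq_Icc, sum_Ico_eq_sum_range, add_assoc, Nat.add_sub_cancel_left]
      refine sum_congr rfl fun i hi ↦ ?_
      rw [Nat.choose_one_right, Nat.add_sub_cancel_left, add_right_comm j i c,
        ← Nat.choose_symm_add]
      push_cast [mem_range_succ_iff.mp hi]
      congr 1
      abel
    _ = ((∑ p ∈ antidiagonal m, (j + c + p.1).choose (j + c) * (1 + p.2).choose 1 : ℕ) : R) := by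
      rw [Nat.sum_antidiagonal_eq_sum_range_succ_mk]
      push_cast
      exact sum_congr rfl fun i _ ↦ Nat.cast_comm _ _
    _ = (j + m + c + 2).choose (j + m - j) := by
      rw [sum_antidiagonal_choose_add_mul_choose_add, Nat.choose_symm_add, Nat.add_sub_cancel_left,
        show j + c + 1 + 1 + m = j + m + c + 2 by ring]

theorem cast_choose_eq_mul_factorial_pred_div {K : Type*} [DivisionSemiring K] [CharZero K]
    {N k : ℕ} (hN : N ≠ 0) (hk : k ≤ N) :
    (N.choose k : K) = N * ((N - 1).factorial / (k.factorial * (N - k).factorial)) := by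
  rw [Nat.cast_choose K hk, ← Nat.mul_factorial_pred hN, Nat.cast_mul, mul_div_assoc]

open Finset in
/-- For `1 ≤ j ≤ n`,
`C(2j, j-1)·C(n+j+1, n-j) = 2j·((2j-1)!/((j-1)!(j+1)!))·∑_{l=j}^n (n+1-l)·C(l+j-1, l-j)`.
This identifies the coefficient `a_j^{(n,1)}` of `e^{-jt}` in the first Weinstein
function `Λ_1^n(t) = -∑_{l=1}^n (n+1-l)·Ȧ_l(t)`. -/
theorem first_weinstein_coefficient_identity (j n : ℕ) (hj : 1 ≤ j) (hjn : j ≤ n) :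
    ((Nat.choose (2 * j) (j - 1)) : ℚ) * (Nat.choose (n + j + 1) (n - j)) =
      2 * (j : ℚ) * ((Nat.factorial (2 * j - 1) : ℚ) /
        ((Nat.factorial (j - 1) : ℚ) * (Nat.factorial (j + 1) : ℚ))) *
      ∑ l ∈ Icc j n, ((n : ℚ) + 1 - (l : ℚ)) * (Nat.choose (l + j - 1) (l - j)) := by
  have sum_eq : ∑ l ∈ Icc j n, ((n : ℚ) + 1 - l) * (l + j - 1).choose (l - j) =
      (n + j + 1).choose (n - j) := by
    simp only [Nat.add_sub_assoc hj]
    rw [sum_Icc_sub_mul_choose_sub (j - 1) hjn, show n + (j - 1) + 2 = n + j + 1 by lia]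
  have choose_eq := cast_choose_eq_mul_factorial_pred_div (K := ℚ) (N := 2 * j) (k := j - 1)
    (by lia) (by lia)
  rw [show 2 * j - (j - 1) = j + 1 by lia, Nat.cast_mul, Nat.cast_ofNat] at choose_eq
  rw [sum_eq, choose_eq]
end

section
/- Let n ≥ 1 and let τ_1, …, τ_{n+1} be a de Branges system of index n. Then for every k with 1 ≤ k ≤ n+1, the limit lim_{t→∞} τ_k(t) = 0 holds (i.e., τ_k(t) tends to 0 as t tends to +∞). -/
/-!
Solved for the lower index, each equation says that `τ_k + τ̇_k / k` is the forcing term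
`τ_{k+1} - τ̇_{k+1} / (k + 1)`. If `f + a f'` converges and `0 < a`, then `f` converges to the same
limit, because the initial value is damped by `exp (-t / a)`, and hence `f'` tends to `0`. Starting
from `τ_{n+1} = 0`, convergence of `τ_k` and of `τ̇_k` therefore propagates down the indices.
-/

open Filter Topology

section RelaxationEquation

variable {E : Type*} [NormedAddCommGroup E] [NormedSpace ℝ E] {f f' : ℝ → E} {l : E} {a : ℝ}

lemma norm_le_exp_mul_norm_add_of_norm_add_smul_deriv_le {T t ε : ℝ} (ha : 0 < a) (hTt : T ≤ t)
    (hf : ∀ s ∈ Set.Icc T t, HasDerivAt f (f' s) s)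
    (hε : ∀ s ∈ Set.Icc T t, ‖f s + a • f' s‖ ≤ ε) :
    ‖f t‖ ≤ Real.exp (-((t - T) / a)) * ‖f T‖ + ε := by
  have hε_nonneg : 0 ≤ ε := (norm_nonneg _).trans (hε T ⟨le_rfl, hTt⟩)
  have hexp (s : ℝ) : HasDerivAt (fun s => Real.exp ((s - T) / a))
      (Real.exp ((s - T) / a) * (1 / a)) s :=
    (((hasDerivAt_id s).sub_const T).div_const a).exp
  have hg (s : ℝ) (hs : s ∈ Set.Icc T t) :
      HasDerivAt (fun s => Real.exp ((s - T) / a) • f s)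
        ((Real.exp ((s - T) / a) * (1 / a)) • (f s + a • f' s)) s := by
    refine ((hexp s).smul (hf s hs)).congr_deriv ?_
    rw [smul_add, smul_smul, mul_assoc, one_div_mul_cancel ha.ne', mul_one, add_comm]
  have hbound : ‖Real.exp ((t - T) / a) • f t‖ ≤ ‖f T‖ + ε * Real.exp ((t - T) / a) := by
    refine image_norm_le_of_norm_deriv_right_le_deriv_boundary
      (B := fun s => ‖f T‖ + ε * Real.exp ((s - T) / a))
      (fun s hs => (hg s hs).continuousAt.continuousWithinAt)
      (fun s hs => (hg s (Set.Ico_subset_Icc_self hs)).hasDerivWithinAt) ?_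
      (fun s => ((hexp s).const_mul ε).const_add _) (fun s hs => ?_) ⟨hTt, le_rfl⟩
    · simpa using hε_nonneg
    · have hrate : 0 ≤ Real.exp ((s - T) / a) * (1 / a) := by positivity
      rw [norm_smul, Real.norm_of_nonneg hrate, mul_comm ε]
      exact mul_le_mul_of_nonneg_left (hε s (Set.Ico_subset_Icc_self hs)) hrate
  rw [norm_smul, Real.norm_of_nonneg (Real.exp_pos _).le] at hbound
  calc ‖f t‖ = Real.exp (-((t - T) / a)) * (Real.exp ((t - T) / a) * ‖f t‖) := by
        rw [← mul_assoc, ← Real.exp_add, neg_add_cancel, Real.exp_zero, one_mul]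
    _ ≤ Real.exp (-((t - T) / a)) * (‖f T‖ + ε * Real.exp ((t - T) / a)) := by gcongr
    _ = Real.exp (-((t - T) / a)) * ‖f T‖ + ε := by
        rw [mul_add, mul_left_comm, ← Real.exp_add, neg_add_cancel, Real.exp_zero, mul_one]

lemma tendsto_zero_of_tendsto_add_smul_deriv (ha : 0 < a)
    (hf : ∀ᶠ t in atTop, HasDerivAt f (f' t) t)
    (h : Tendsto (fun t => f t + a • f' t) atTop (𝓝 0)) : Tendsto f atTop (𝓝 0) := by
  refine NormedAddGroup.tendsto_nhds_zero.2 fun ε hε => ?_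
  have hsmall : ∀ᶠ t in atTop, ‖f t + a • f' t‖ < ε / 2 :=
    NormedAddGroup.tendsto_nhds_zero.1 h _ (half_pos hε)
  obtain ⟨T, hT⟩ := eventually_atTop.1 (hf.and hsmall)
  have htransient : Tendsto (fun t => Real.exp (-((t - T) / a)) * ‖f T‖) atTop (𝓝 0) := by
    have hexp : Tendsto (fun t => Real.exp (-((t - T) / a))) atTop (𝓝 0) :=
      Real.tendsto_exp_neg_atTop_nhds_zero.comp
        ((tendsto_atTop_add_const_right _ (-T) tendsto_id).atTop_div_const ha)
    simpa only [zero_mul] using hexp.mul_const ‖f T‖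
  filter_upwards [htransient.eventually_lt_const (half_pos hε), eventually_ge_atTop T]
    with t ht hTt
  have hle : ‖f t‖ ≤ Real.exp (-((t - T) / a)) * ‖f T‖ + ε / 2 :=
    norm_le_exp_mul_norm_add_of_norm_add_smul_deriv_le ha hTt
      (fun s hs => (hT s hs.1).1) (fun s hs => (hT s hs.1).2.le)
  linarith

lemma tendsto_of_tendsto_add_smul_deriv (ha : 0 < a)
    (hf : ∀ᶠ t in atTop, HasDerivAt f (f' t) t)
    (h : Tendsto (fun t => f t + a • f' t) atTop (𝓝 l)) : Tendsto f atTop (𝓝 l) := by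
  refine tendsto_sub_nhds_zero_iff.1 <|
    tendsto_zero_of_tendsto_add_smul_deriv ha (hf.mono fun t ht => ht.sub_const l) ?_
  exact (tendsto_sub_nhds_zero_iff.2 h).congr fun t => add_sub_right_comm _ _ _

lemma tendsto_deriv_zero_of_tendsto_add_smul_deriv (ha : 0 < a)
    (hf : ∀ᶠ t in atTop, HasDerivAt f (f' t) t)
    (h : Tendsto (fun t => f t + a • f' t) atTop (𝓝 l)) : Tendsto f' atTop (𝓝 0) := by
  have hdiff := (h.sub (tendsto_of_tendsto_add_smul_deriv ha hf h)).const_smul a⁻¹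
  simpa only [add_sub_cancel_left, inv_smul_smul₀ ha.ne', sub_self, smul_zero] using hdiff

end RelaxationEquation

theorem deBranges_tendsto_zero_general {E : Type*} [NormedAddCommGroup E] [NormedSpace ℝ E]
    {m N : ℕ} {τ τ' : ℕ → ℝ → E} {a b : ℕ → ℝ} {l : E}
    (ha : ∀ k, m ≤ k → k < N → 0 < a k)
    (hderiv : ∀ k, m ≤ k → k ≤ N → ∀ᶠ t in atTop, HasDerivAt (τ k) (τ' k t) t)
    (htop : Tendsto (τ N) atTop (𝓝 l)) (htop' : Tendsto (τ' N) atTop (𝓝 0))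
    (hsystem : ∀ k, m ≤ k → k < N → ∀ᶠ t in atTop,
      τ (k + 1) t - τ k t = a k • τ' k t + b k • τ' (k + 1) t)
    {k : ℕ} (hmk : m ≤ k) (hkN : k ≤ N) :
    Tendsto (τ k) atTop (𝓝 l) ∧ Tendsto (τ' k) atTop (𝓝 0) := by
  refine Nat.decreasingInduction'
    (P := fun j => Tendsto (τ j) atTop (𝓝 l) ∧ Tendsto (τ' j) atTop (𝓝 0))
    (fun j hjN hkj ⟨hτ, hτ'⟩ => ?_) hkN ⟨htop, htop'⟩
  have hmj : m ≤ j := hmk.trans hkj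
  have hforcing : Tendsto (fun t => τ (j + 1) t - b j • τ' (j + 1) t) atTop (𝓝 l) := by
    simpa only [smul_zero, sub_zero] using hτ.sub (hτ'.const_smul (b j))
  have hrelax : Tendsto (fun t => τ j t + a j • τ' j t) atTop (𝓝 l) := by
    refine hforcing.congr' ((hsystem j hmj hjN).mono fun t ht => ?_)
    rw [sub_eq_iff_eq_add.1 ht]
    module
  exact ⟨tendsto_of_tendsto_add_smul_deriv (ha j hmj hjN) (hderiv j hmj hjN.le) hrelax,
    tendsto_deriv_zero_of_tendsto_add_smul_deriv (ha j hmj hjN) (hderiv j hmj hjN.le) hrelax⟩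

/-- The de Branges functions tend to `0` as `t → +∞`. -/
theorem deBranges_tendsto_zero (n : ℕ) (hn : 1 ≤ n) (τ : ℕ → ℝ → ℝ)
    (hτ : IsDeBrangesSystem n τ) :
    ∀ k : ℕ, 1 ≤ k → k ≤ n + 1 →
      Filter.Tendsto (τ k) Filter.atTop (nhds 0) := by
  have htop : τ (n + 1) = fun _ => 0 := funext hτ.top_eq_zero
  intro k hk hkn
  refine (deBranges_tendsto_zero_general (τ' := fun k => deriv (τ k))
    (a := fun k => (k : ℝ)⁻¹) (b := fun k => ((k : ℝ) + 1)⁻¹)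
    (fun j hj _ => by positivity)
    (fun j hj hjn => .of_forall fun t => (hτ.differentiable j hj hjn t).hasDerivAt)
    (by simp [htop]) (by simp [htop]) (fun j hj hjn => .of_forall fun t => ?_) hk hkn).1
  simpa only [smul_eq_mul, div_eq_inv_mul] using hτ.system j hj (Nat.le_of_lt_succ hjn) t
end
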